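/- arXiv:2504.01479 — 2 statements merged into one kernel-verified Lean document; each statement's English description precedes it below -/
import Mathlib

section
/- For every N ≥ 2 and every 1 ≤ i ≤ N−1, the determinants of the trailing submatrices satisfy the three-term recursion det M_{i:N,c} = (λ_i + λ_{i+1} e^{2n(ξ_{i+1}−ξ_i)}) · det M_{i+1:N,c} − (λ_{i+1}^2 − 1/4) e^{2n(ξ_{i+1}−ξ_i)} · det M_{i+2:N,c}, with the convention det M_{N+1:N,c} = 1. -/
/-!
Put `x_p = n ξ_p` and `r = e^{x_{i+1} - x_i}`. Beyond the leading `2 × 2` block, row `i` of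
`M_{i:N,c}` is `r` times row `i+1`, and column `i` is `r` times column `i+1`. Eliminating with these
two proportionalities makes the first row and column vanish beyond the leading block, so expanding
along both of them leaves only the two trailing minors. Their coefficients simplify because
`cosh x · e^{-x} = (1 + e^{-2x}) / 2` and `sinh x · e^{-x} = (1 - e^{-2x}) / 2`: the exponentials
`e^{-2x_{i+1}}` cancel and `-(λ_{i+1} + 1/2) (1/2 - λ_{i+1}) = λ_{i+1}² - 1/4` remains.
-/

open Finset

/-- The trailing submatrix `M_{i:N,c}` (with arbitrary complex parameters
`λ_1, …, λ_N` given by `lam`), with rows and columns indexed by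
`p, q ∈ {i, …, N}` (realized as `p = i + a` for `a : Fin (N+1−i)`):
the `(p,p)` entry is `λ_p − (1/2) e^{−2nξ_p}`, the `(p,q)` entry for
`p < q` is `−cosh(nξ_q) e^{−nξ_p}`, and for `p > q` it is `sinh(nξ_p) e^{−nξ_q}`.
For `i = N+1` this is the empty matrix, whose determinant is `1`. -/
noncomputable def McSub (n N : ℕ) (ξ : ℕ → ℝ) (lam : ℕ → ℂ) (i : ℕ) :
    Matrix (Fin (N + 1 - i)) (Fin (N + 1 - i)) ℂ :=
  fun a b =>
    if a = b then
      lam (i + (a : ℕ)) - ((Real.exp (-(2 * n * ξ (i + (a : ℕ)))) / 2 : ℝ) : ℂ)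
    else if a < b then
      -(((Real.cosh (n * ξ (i + (b : ℕ))) * Real.exp (-(n * ξ (i + (a : ℕ))))) : ℝ) : ℂ)
    else
      (((Real.sinh (n * ξ (i + (a : ℕ))) * Real.exp (-(n * ξ (i + (b : ℕ))))) : ℝ) : ℂ)

section ThreeTermExpansion

variable {R : Type*} [CommRing R] {m : ℕ} (A : Matrix (Fin (m + 2)) (Fin (m + 2)) R)

lemma det_eq_of_zero_row_col_eq_zero (hrow : ∀ j : Fin m, A 0 j.succ.succ = 0)
    (hcol : ∀ j : Fin m, A j.succ.succ 0 = 0) :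
    A.det = A 0 0 * (A.submatrix Fin.succ Fin.succ).det -
      A 0 1 * A 1 0 *
        ((A.submatrix Fin.succ Fin.succ).submatrix Fin.succ Fin.succ).det := by
  have minor_zero_one : (A.submatrix Fin.succ (Fin.succ 0).succAbove).det =
      A 1 0 * ((A.submatrix Fin.succ Fin.succ).submatrix Fin.succ Fin.succ).det := by
    rw [Matrix.det_succ_column_zero, Fin.sum_univ_succ]
    simp [hcol, Matrix.submatrix_submatrix, Function.comp_def]
  rw [Matrix.det_succ_row_zero, Fin.sum_univ_succ, Fin.sum_univ_succ, minor_zero_one]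
  simp only [hrow, Fin.val_zero, Fin.val_one, Fin.succAbove_zero, Fin.succ_zero_eq_one, mul_zero,
    zero_mul, sum_const_zero]
  ring

lemma det_eq_of_zero_row_col_eq_mul (r s : R)
    (hrow : ∀ j : Fin m, A 0 j.succ.succ = r * A 1 j.succ.succ)
    (hcol : ∀ j : Fin m, A j.succ.succ 0 = s * A j.succ.succ 1) :
    A.det = (A 0 0 - r * A 1 0 - s * (A 0 1 - r * A 1 1)) *
        (A.submatrix Fin.succ Fin.succ).det -
      (A 0 1 - r * A 1 1) * (A 1 0 - s * A 1 1) *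
        ((A.submatrix Fin.succ Fin.succ).submatrix Fin.succ Fin.succ).det := by
  let B := A.updateRow 0 (A 0 + (-r) • A 1)
  let C := B.updateCol 0 fun a => B a 0 + (-s) • B a 1
  have det_C : C.det = A.det :=
    (Matrix.det_updateCol_add_smul_self B zero_ne_one _).trans
      (Matrix.det_updateRow_add_smul_self A zero_ne_one _)
  have C_zero_zero : C 0 0 = A 0 0 - r * A 1 0 - s * (A 0 1 - r * A 1 1) := by
    simp [C, B, ← sub_eq_add_neg]
  have C_zero_succ (b : Fin (m + 1)) : C 0 b.succ = A 0 b.succ - r * A 1 b.succ := by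
    simp [C, B, ← sub_eq_add_neg]
  have C_succ_zero (a : Fin (m + 1)) : C a.succ 0 = A a.succ 0 - s * A a.succ 1 := by
    simp [C, B, ← sub_eq_add_neg]
  have C_submatrix : C.submatrix Fin.succ Fin.succ = A.submatrix Fin.succ Fin.succ := by
    ext a b
    simp [C, B]
  have C_row (j : Fin m) : C 0 j.succ.succ = 0 := by rw [C_zero_succ, hrow, sub_self]
  have C_col (j : Fin m) : C j.succ.succ 0 = 0 := by rw [C_succ_zero, hcol, sub_self]
  have C_zero_one : C 0 1 = A 0 1 - r * A 1 1 := C_zero_succ 0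
  have C_one_zero : C 1 0 = A 1 0 - s * A 1 1 := C_succ_zero 0
  rw [← det_C, det_eq_of_zero_row_col_eq_zero C C_row C_col, C_submatrix, C_zero_zero, C_zero_one,
    C_one_zero]

end ThreeTermExpansion

lemma cosh_mul_exp_neg (z : ℂ) :
    Complex.cosh z * Complex.exp (-z) = (1 + Complex.exp (-(2 * z))) / 2 := by
  rw [Complex.cosh, div_mul_eq_mul_div, add_mul, ← Complex.exp_add, ← Complex.exp_add,
    add_neg_cancel, Complex.exp_zero, ← neg_add, ← two_mul]

lemma sinh_mul_exp_neg (z : ℂ) :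
    Complex.sinh z * Complex.exp (-z) = (1 - Complex.exp (-(2 * z))) / 2 := by
  rw [Complex.sinh, div_mul_eq_mul_div, sub_mul, ← Complex.exp_add, ← Complex.exp_add,
    add_neg_cancel, Complex.exp_zero, ← neg_add, ← two_mul]

lemma exp_neg_eq_exp_sub_mul (y z : ℂ) :
    Complex.exp (-y) = Complex.exp (z - y) * Complex.exp (-z) := by
  rw [← Complex.exp_add, sub_add_eq_add_sub, add_neg_cancel, zero_sub]

/-- The matrix `M_{i:i+k-1,c}` with the products `n ξ_p` replaced by arbitrary complex numbers
`x p`. Taking the size `k` as a parameter keeps the truncated subtraction `N + 1 - i` out of the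
index type. -/
noncomputable def coshSinhMatrix (x lam : ℕ → ℂ) (i k : ℕ) : Matrix (Fin k) (Fin k) ℂ :=
  fun a b =>
    if a = b then lam (i + a) - Complex.exp (-(2 * x (i + a))) / 2
    else if a < b then -(Complex.cosh (x (i + b)) * Complex.exp (-x (i + a)))
    else Complex.sinh (x (i + a)) * Complex.exp (-x (i + b))

lemma det_McSub_eq_det_coshSinhMatrix (n : ℕ) {N : ℕ} (ξ : ℕ → ℝ) (lam : ℕ → ℂ) {i k : ℕ}
    (h : N + 1 - i = k) :
    (McSub n N ξ lam i).det = (coshSinhMatrix (fun p => n * ξ p) lam i k).det := by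
  subst h
  congr 1
  ext a b
  simp [McSub, coshSinhMatrix, mul_assoc]

namespace coshSinhMatrix

variable (x lam : ℕ → ℂ) (i : ℕ) {k : ℕ}

lemma apply_self (a : Fin k) :
    coshSinhMatrix x lam i k a a = lam (i + a) - Complex.exp (-(2 * x (i + a))) / 2 :=
  if_pos rfl

lemma apply_of_lt {a b : Fin k} (h : a < b) :
    coshSinhMatrix x lam i k a b = -(Complex.cosh (x (i + b)) * Complex.exp (-x (i + a))) := by
  rw [coshSinhMatrix, if_neg h.ne, if_pos h]

lemma apply_of_gt {a b : Fin k} (h : b < a) :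
    coshSinhMatrix x lam i k a b = Complex.sinh (x (i + a)) * Complex.exp (-x (i + b)) := by
  rw [coshSinhMatrix, if_neg h.ne', if_neg h.not_gt]

lemma submatrix_succ :
    (coshSinhMatrix x lam i (k + 1)).submatrix Fin.succ Fin.succ =
      coshSinhMatrix x lam (i + 1) k := by
  ext a b
  simp only [Matrix.submatrix_apply, coshSinhMatrix, Fin.succ_inj, Fin.succ_lt_succ_iff,
    Fin.val_succ, add_assoc, add_comm 1]

lemma apply_zero_succ_succ (j : Fin k) :
    coshSinhMatrix x lam i (k + 2) 0 j.succ.succ =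
      Complex.exp (x (i + 1) - x i) * coshSinhMatrix x lam i (k + 2) 1 j.succ.succ := by
  rw [apply_of_lt x lam i j.succ.succ_pos, apply_of_lt x lam i (Fin.one_lt_succ_succ j),
    Fin.val_zero, Fin.val_one, add_zero, exp_neg_eq_exp_sub_mul (x i) (x (i + 1))]
  ring

lemma apply_succ_succ_zero (j : Fin k) :
    coshSinhMatrix x lam i (k + 2) j.succ.succ 0 =
      Complex.exp (x (i + 1) - x i) * coshSinhMatrix x lam i (k + 2) j.succ.succ 1 := by
  rw [apply_of_gt x lam i j.succ.succ_pos, apply_of_gt x lam i (Fin.one_lt_succ_succ j),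
    Fin.val_zero, Fin.val_one, add_zero, exp_neg_eq_exp_sub_mul (x i) (x (i + 1))]
  ring

lemma apply_zero_one :
    coshSinhMatrix x lam i (k + 2) 0 1 =
      -(Complex.exp (x (i + 1) - x i) * ((1 + Complex.exp (-(2 * x (i + 1)))) / 2)) := by
  rw [apply_of_lt x lam i Fin.zero_lt_one, Fin.val_zero, Fin.val_one, add_zero,
    exp_neg_eq_exp_sub_mul (x i) (x (i + 1)), mul_left_comm, cosh_mul_exp_neg]

lemma apply_one_zero :
    coshSinhMatrix x lam i (k + 2) 1 0 =
      Complex.exp (x (i + 1) - x i) * ((1 - Complex.exp (-(2 * x (i + 1)))) / 2) := by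
  rw [apply_of_gt x lam i Fin.zero_lt_one, Fin.val_zero, Fin.val_one, add_zero,
    exp_neg_eq_exp_sub_mul (x i) (x (i + 1)), mul_left_comm, sinh_mul_exp_neg]

end coshSinhMatrix

open coshSinhMatrix in
theorem det_McSub_rec_general (x lam : ℕ → ℂ) (i k : ℕ) :
    (coshSinhMatrix x lam i (k + 2)).det =
      (lam i + lam (i + 1) * Complex.exp (2 * (x (i + 1) - x i))) *
          (coshSinhMatrix x lam (i + 1) (k + 1)).det -
        (lam (i + 1) ^ 2 - 1 / 4) * Complex.exp (2 * (x (i + 1) - x i)) *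
          (coshSinhMatrix x lam (i + 2) k).det := by
  have exp_two_mul (z : ℂ) : Complex.exp (2 * z) = Complex.exp z ^ 2 :=
    mod_cast Complex.exp_nat_mul z 2
  have exp_neg_two_mul : Complex.exp (-(2 * x i)) =
      Complex.exp (x (i + 1) - x i) ^ 2 * Complex.exp (-(2 * x (i + 1))) := by
    rw [exp_neg_eq_exp_sub_mul (2 * x i) (2 * x (i + 1)), ← mul_sub, exp_two_mul]
  rw [det_eq_of_zero_row_col_eq_mul _ _ _ (apply_zero_succ_succ x lam i)
      (apply_succ_succ_zero x lam i),
    submatrix_succ, submatrix_succ, apply_zero_one, apply_one_zero, apply_self, apply_self,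
    Fin.val_zero, Fin.val_one, add_zero, exp_neg_two_mul, exp_two_mul]
  ring

/-- Three-term recursion for the determinants of the trailing submatrices
`M_{i:N,c}` (the convention `det M_{N+1:N,c} = 1` is automatic since the empty
matrix has determinant `1`). -/
theorem det_McSub_rec (n N : ℕ) (hn : 0 < n) (hN : 2 ≤ N) (ξ : ℕ → ℝ)
    (hξ : ∀ i j, 1 ≤ i → i < j → j ≤ N → ξ j < ξ i) (hpos : 0 < ξ N)
    (lam : ℕ → ℂ) (i : ℕ) (hi1 : 1 ≤ i) (hiN : i ≤ N - 1) :
    (McSub n N ξ lam i).det =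
      (lam i + lam (i + 1) * ((Real.exp (2 * n * (ξ (i + 1) - ξ i)) : ℝ) : ℂ)) *
          (McSub n N ξ lam (i + 1)).det -
        (lam (i + 1) ^ 2 - 1 / 4) * ((Real.exp (2 * n * (ξ (i + 1) - ξ i)) : ℝ) : ℂ) *
          (McSub n N ξ lam (i + 2)).det := by
  obtain ⟨k, rfl⟩ : ∃ k, N = i + k + 1 := ⟨N - i - 1, by omega⟩
  rw [det_McSub_eq_det_coshSinhMatrix n ξ lam (k := k + 2) (by omega),
    det_McSub_eq_det_coshSinhMatrix n ξ lam (k := k + 1) (by omega),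
    det_McSub_eq_det_coshSinhMatrix n ξ lam (k := k) (by omega), det_McSub_rec_general]
  push_cast
  simp only [mul_sub, mul_assoc]
end

section
/- For every N ≥ 2 and every 1 ≤ i ≤ N−1, the determinants of the trailing submatrices satisfy the three-term recursion det M_{i:N,s} = (λ_i + λ_{i+1} e^{2n(ξ_{i+1}−ξ_i)}) · det M_{i+1:N,s} − (λ_{i+1}^2 − 1/4) e^{2n(ξ_{i+1}−ξ_i)} · det M_{i+2:N,s}, with the convention det M_{N+1:N,s} = 1. -/
/-!
Write `u_p = e^{-η_p}` with `η_p = n ξ_p`. Off the diagonal the matrix has rank-one triangles, the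
upper one generated by `u_p (-sinh η_q)` and the lower one by `(cosh η_p) u_q`. Hence, with
`r = u_i / u_{i+1}`, row `i` is `r` times row `i + 1` to the right of column `i + 1`, and likewise
for columns. Subtracting `r` times row `i + 1` from row `i`, and then `r` times column `i + 1` from
column `i`, decouples index `i` from all indices beyond `i + 1`, so the determinant obeys the
three-term recursion of a tridiagonal one. The coefficients collapse because
`cosh η - sinh η = e^{-η}` and `cosh² η - sinh² η = 1`.
-/

open Finset

/-- The trailing submatrix `M_{i:N,s}` (with arbitrary complex parameters
`λ_1, …, λ_N` given by `lam`), with rows and columns indexed by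
`p, q ∈ {i, …, N}` (realized as `p = i + a` for `a : Fin (N+1−i)`):
the `(p,p)` entry is `λ_p + (1/2) e^{−2nξ_p}`, the `(p,q)` entry for
`p < q` is `−sinh(nξ_q) e^{−nξ_p}`, and for `p > q` it is `cosh(nξ_p) e^{−nξ_q}`.
For `i = N+1` this is the empty matrix, whose determinant is `1`. -/
noncomputable def MsSub (n N : ℕ) (ξ : ℕ → ℝ) (lam : ℕ → ℂ) (i : ℕ) :
    Matrix (Fin (N + 1 - i)) (Fin (N + 1 - i)) ℂ :=
  fun a b =>
    if a = b then
      lam (i + (a : ℕ)) + ((Real.exp (-(2 * n * ξ (i + (a : ℕ)))) / 2 : ℝ) : ℂ)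
    else if a < b then
      -(((Real.sinh (n * ξ (i + (b : ℕ))) * Real.exp (-(n * ξ (i + (a : ℕ))))) : ℝ) : ℂ)
    else
      (((Real.cosh (n * ξ (i + (a : ℕ))) * Real.exp (-(n * ξ (i + (b : ℕ))))) : ℝ) : ℂ)

section Determinant

variable {R : Type*} [CommRing R] {m : ℕ}

lemma det_eq_mul_det_of_col_zero (A : Matrix (Fin (m + 1)) (Fin (m + 1)) R)
    (hcol : ∀ p : Fin m, A p.succ 0 = 0) :
    A.det = A 0 0 * (A.submatrix Fin.succ Fin.succ).det := by
  rw [Matrix.det_succ_column_zero, Fin.sum_univ_succ, Finset.sum_eq_zero fun p _ ↦ by simp [hcol p]]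
  simp

lemma det_eq_sub_of_row_col_zero (A : Matrix (Fin (m + 2)) (Fin (m + 2)) R)
    (hrow : ∀ q : Fin m, A 0 q.succ.succ = 0) (hcol : ∀ p : Fin m, A p.succ.succ 0 = 0) :
    A.det = A 0 0 * (A.submatrix Fin.succ Fin.succ).det -
      A 0 1 * A 1 0 * ((A.submatrix Fin.succ Fin.succ).submatrix Fin.succ Fin.succ).det := by
  have hminor : (A.submatrix Fin.succ (Fin.succAbove 1)).det =
      A 1 0 * ((A.submatrix Fin.succ Fin.succ).submatrix Fin.succ Fin.succ).det := by
    rw [det_eq_mul_det_of_col_zero _ fun p ↦ by simp [hcol p]]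
    rfl
  rw [Matrix.det_succ_row_zero, Fin.sum_univ_succ, Fin.sum_univ_succ,
    Finset.sum_eq_zero fun q _ ↦ by simp [hrow q], Fin.succ_zero_eq_one, hminor]
  simp [mul_assoc, sub_eq_add_neg]

lemma det_eq_sub_of_row_col_proportional (A : Matrix (Fin (m + 2)) (Fin (m + 2)) R) (r s : R)
    (hrow : ∀ q : Fin m, A 0 q.succ.succ = r * A 1 q.succ.succ)
    (hcol : ∀ p : Fin m, A p.succ.succ 0 = s * A p.succ.succ 1) :
    A.det =
      (A 0 0 - r * A 1 0 - s * (A 0 1 - r * A 1 1)) * (A.submatrix Fin.succ Fin.succ).det -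
        (A 0 1 - r * A 1 1) * (A 1 0 - s * A 1 1) *
          ((A.submatrix Fin.succ Fin.succ).submatrix Fin.succ Fin.succ).det := by
  let B := A.updateRow 0 (A 0 + -r • A 1)
  let C := B.updateCol 0 fun p ↦ B p 0 + -s • B p 1
  have hdet : C.det = A.det :=
    (Matrix.det_updateCol_add_smul_self B zero_ne_one (-s)).trans
      (Matrix.det_updateRow_add_smul_self A zero_ne_one (-r))
  have hsub : C.submatrix Fin.succ Fin.succ = A.submatrix Fin.succ Fin.succ := by
    ext p q
    simp [C, B, Matrix.updateRow_apply]
  have hCrow (q : Fin m) : C 0 q.succ.succ = 0 := by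
    simp [C, B, Matrix.updateRow_apply, hrow q]
  have hCcol (p : Fin m) : C p.succ.succ 0 = 0 := by
    simp [C, B, Matrix.updateRow_apply, hcol p]
  have h00 : C 0 0 = A 0 0 - r * A 1 0 - s * (A 0 1 - r * A 1 1) := by
    simp [C, B, sub_eq_add_neg]
  have h01 : C 0 1 = A 0 1 - r * A 1 1 := by
    simp [C, B, sub_eq_add_neg]
  have h10 : C 1 0 = A 1 0 - s * A 1 1 := by
    simp [C, B, Matrix.updateRow_apply, sub_eq_add_neg]
  rw [← hdet, det_eq_sub_of_row_col_zero C hCrow hCcol, hsub, h00, h01, h10]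

end Determinant

/-- The `k × k` block of an infinite matrix with rows and columns `i, …, i + k - 1`; the trailing
submatrices `M_{i:N,s}` have `k = N + 1 - i`. The size `k` rather than the last index is a
parameter, which keeps subtraction out of the index type. -/
def diagBlock {R : Type*} (A : Matrix ℕ ℕ R) (i k : ℕ) : Matrix (Fin k) (Fin k) R :=
  A.submatrix (fun a ↦ i + a) (fun a ↦ i + a)

lemma diagBlock_submatrix_succ {R : Type*} (A : Matrix ℕ ℕ R) (i k : ℕ) :
    (diagBlock A i (k + 1)).submatrix Fin.succ Fin.succ = diagBlock A (i + 1) k := by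
  ext a b
  simp [diagBlock, add_assoc, add_comm 1]

/-- The semiseparable matrix with diagonal `d`, whose part above the diagonal is that of the
rank-one matrix `u_p v_q`, and whose part below the diagonal is that of `w_p x_q`. It isolates the
structure of the `M_{i:N,s}` that the recursion depends on. -/
def semiseparable {ι R : Type*} [LinearOrder ι] [Mul R] (d u v w x : ι → R) : Matrix ι ι R :=
  Matrix.of fun p q ↦ if p = q then d p else if p < q then u p * v q else w p * x q

section Semiseparable

variable {ι R : Type*} [LinearOrder ι] [Mul R] (d u v w x : ι → R)

lemma semiseparable_apply_self (p : ι) : semiseparable d u v w x p p = d p := by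
  simp [semiseparable]

lemma semiseparable_apply_of_lt {p q : ι} (h : p < q) :
    semiseparable d u v w x p q = u p * v q := by
  simp [semiseparable, h, h.ne]

lemma semiseparable_apply_of_gt {p q : ι} (h : q < p) :
    semiseparable d u v w x p q = w p * x q := by
  simp [semiseparable, h.not_gt, h.ne']

end Semiseparable

theorem det_diagBlock_semiseparable {R : Type*} [CommRing R] (d u v w x : ℕ → R) {r s : R} {i : ℕ}
    (hu : u i = r * u (i + 1)) (hx : x i = s * x (i + 1)) (m : ℕ) :
    (diagBlock (semiseparable d u v w x) i (m + 2)).det =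
      (d i - r * s * (u (i + 1) * v (i + 1) + w (i + 1) * x (i + 1) - d (i + 1))) *
          (diagBlock (semiseparable d u v w x) (i + 1) (m + 1)).det -
        r * s * (u (i + 1) * v (i + 1) - d (i + 1)) * (w (i + 1) * x (i + 1) - d (i + 1)) *
          (diagBlock (semiseparable d u v w x) (i + 2) m).det := by
  have hlt : i < i + 1 := i.lt_succ_self
  rw [det_eq_sub_of_row_col_proportional _ r s, diagBlock_submatrix_succ, diagBlock_submatrix_succ]
  · simp only [diagBlock, Matrix.submatrix_apply, Fin.val_zero, Fin.val_one, add_zero,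
      semiseparable_apply_self, semiseparable_apply_of_lt d u v w x hlt,
      semiseparable_apply_of_gt d u v w x hlt, hu, hx]
    ring
  · intro q
    simp only [diagBlock, Matrix.submatrix_apply, Fin.val_zero, Fin.val_one, Fin.val_succ, add_zero]
    rw [semiseparable_apply_of_lt _ _ _ _ _ (by lia), semiseparable_apply_of_lt _ _ _ _ _ (by lia),
      hu, mul_assoc]
  · intro p
    simp only [diagBlock, Matrix.submatrix_apply, Fin.val_zero, Fin.val_one, Fin.val_succ, add_zero]
    rw [semiseparable_apply_of_gt _ _ _ _ _ (by lia), semiseparable_apply_of_gt _ _ _ _ _ (by lia),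
      hx, mul_left_comm]

/-- The infinite matrix of which the `M_{i:N,s}` are diagonal blocks, with an arbitrary complex
sequence `η` in place of `n ξ`. -/
noncomputable def msMatrix (η lam : ℕ → ℂ) : Matrix ℕ ℕ ℂ :=
  semiseparable (fun p ↦ lam p + Complex.exp (-η p) ^ 2 / 2) (fun p ↦ Complex.exp (-η p))
    (fun q ↦ -Complex.sinh (η q)) (fun p ↦ Complex.cosh (η p)) (fun q ↦ Complex.exp (-η q))

lemma MsSub_eq_diagBlock (n N : ℕ) (ξ : ℕ → ℝ) (lam : ℕ → ℂ) (i : ℕ) :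
    MsSub n N ξ lam i = diagBlock (msMatrix (fun p ↦ n * ξ p) lam) i (N + 1 - i) := by
  ext a b
  simp only [MsSub, diagBlock, msMatrix, semiseparable, Matrix.submatrix_apply, Matrix.of_apply,
    add_right_inj, add_lt_add_iff_left, Fin.val_inj, Fin.val_fin_lt, ← Complex.exp_nat_mul]
  push_cast
  ring_nf

lemma exp_neg_mul_neg_sinh_sub (z c : ℂ) :
    Complex.exp (-z) * -Complex.sinh z - (c + Complex.exp (-z) ^ 2 / 2) = -(c + 1 / 2) := by
  rw [← Complex.cosh_sub_sinh]
  linear_combination (-1 / 2) * Complex.cosh_sq_sub_sinh_sq z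

lemma cosh_mul_exp_neg_sub (z c : ℂ) :
    Complex.cosh z * Complex.exp (-z) - (c + Complex.exp (-z) ^ 2 / 2) = -(c - 1 / 2) := by
  rw [← Complex.cosh_sub_sinh]
  linear_combination (1 / 2) * Complex.cosh_sq_sub_sinh_sq z

theorem det_MsSub_rec_general (η lam : ℕ → ℂ) (i m : ℕ) :
    (diagBlock (msMatrix η lam) i (m + 2)).det =
      (lam i + lam (i + 1) * Complex.exp (2 * (η (i + 1) - η i))) *
          (diagBlock (msMatrix η lam) (i + 1) (m + 1)).det -
        (lam (i + 1) ^ 2 - 1 / 4) * Complex.exp (2 * (η (i + 1) - η i)) *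
          (diagBlock (msMatrix η lam) (i + 2) m).det := by
  set r := Complex.exp (η (i + 1) - η i) with hr
  have hr_sq : Complex.exp (2 * (η (i + 1) - η i)) = r * r := by
    rw [hr, ← Complex.exp_add, two_mul]
  have hexp : Complex.exp (-η i) = r * Complex.exp (-η (i + 1)) := by
    rw [hr, ← Complex.exp_add]
    ring_nf
  have hcorner : lam i + Complex.exp (-η i) ^ 2 / 2 -
      r * r * (Complex.exp (-η (i + 1)) * -Complex.sinh (η (i + 1)) +
        Complex.cosh (η (i + 1)) * Complex.exp (-η (i + 1)) -
        (lam (i + 1) + Complex.exp (-η (i + 1)) ^ 2 / 2)) = lam i + lam (i + 1) * (r * r) := by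
    rw [hexp, ← Complex.cosh_sub_sinh]
    ring
  rw [msMatrix, det_diagBlock_semiseparable _ _ _ _ _ hexp hexp, hcorner,
    exp_neg_mul_neg_sinh_sub, cosh_mul_exp_neg_sub, hr_sq]
  ring

/-- Three-term recursion for the determinants of the trailing submatrices
`M_{i:N,s}` (the convention `det M_{N+1:N,s} = 1` is automatic since the empty
matrix has determinant `1`). -/
theorem det_MsSub_rec (n N : ℕ) (hn : 0 < n) (hN : 2 ≤ N) (ξ : ℕ → ℝ)
    (hξ : ∀ i j, 1 ≤ i → i < j → j ≤ N → ξ j < ξ i) (hpos : 0 < ξ N)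
    (lam : ℕ → ℂ) (i : ℕ) (hi1 : 1 ≤ i) (hiN : i ≤ N - 1) :
    (MsSub n N ξ lam i).det =
      (lam i + lam (i + 1) * ((Real.exp (2 * n * (ξ (i + 1) - ξ i)) : ℝ) : ℂ)) *
          (MsSub n N ξ lam (i + 1)).det -
        (lam (i + 1) ^ 2 - 1 / 4) * ((Real.exp (2 * n * (ξ (i + 1) - ξ i)) : ℝ) : ℂ) *
          (MsSub n N ξ lam (i + 2)).det := by
  obtain ⟨m, hm⟩ : ∃ m, N + 1 - i = m + 2 := ⟨N - 1 - i, by lia⟩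
  rw [MsSub_eq_diagBlock, MsSub_eq_diagBlock, MsSub_eq_diagBlock, hm,
    show N + 1 - (i + 1) = m + 1 by lia, show N + 1 - (i + 2) = m by lia, det_MsSub_rec_general]
  push_cast
  simp only [mul_sub, mul_assoc]
end
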